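/- Let A be a reduced Noetherian one-dimensional commutative ring whose integral closure B in Q(A) is a finite A-module. Then the blow up of Spec A in the conductor ideal C = A :_{Q(A)} B coincides with the normalization Spec B; that is, Proj_A(⊕_{i≥0} C^i) ≅ Spec B over Spec A. -/

import Mathlib

set_option synthInstance.maxHeartbeats 1000000
set_option maxHeartbeats 1000000

open Polynomial AlgebraicGeometry CategoryTheory

universe u

/-- The conductor of an intermediate extension `A ⊆ B ⊆ K`: the ideal of `A` consisting of
the elements `a` such that `a·B ⊆ A` (inside `K`). -/
def conductorIdeal (A : Type*) [CommRing A] (K : Type*) [CommRing K] [Algebra A K]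
    (B : Subalgebra A K) : Ideal A where
  carrier := { a | ∀ b ∈ B, ∃ c : A, algebraMap A K c = algebraMap A K a * b }
  add_mem' := by
    rintro x y hx hy b hb
    obtain ⟨c, hc⟩ := hx b hb
    obtain ⟨d, hd⟩ := hy b hb
    exact ⟨c + d, by rw [map_add, map_add, hc, hd, add_mul]⟩
  zero_mem' := fun b _ => ⟨0, by simp⟩
  smul_mem' := by
    rintro r x hx b hb
    obtain ⟨c, hc⟩ := hx b hb
    exact ⟨r * c, by rw [smul_eq_mul, map_mul, map_mul, hc, mul_assoc]⟩

section Part1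
variable {A : Type u} [CommRing A]

local notation "KK" => FractionRing A
local notation "BB" => integralClosure A (FractionRing A)
local notation "CC" => conductorIdeal A (FractionRing A) (integralClosure A (FractionRing A))

lemma cond_exists_mul {c : A} (hc : c ∈ CC) (b : BB) :
    ∃ c' ∈ CC, algebraMap A KK c' = algebraMap A KK c * b := by
  obtain ⟨c', hc'⟩ := hc b b.2
  refine ⟨c', fun b' hb' => ?_, hc'⟩
  obtain ⟨e, he⟩ := hc (b * b') (mul_mem b.2 hb')
  exact ⟨e, by rw [he, hc', mul_assoc]⟩

lemma cond_exists_regular [Module.Finite A BB] : ∃ c ∈ CC, c ∈ nonZeroDivisors A := by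
  classical
  obtain ⟨s, hs⟩ := (Module.Finite.fg_top : (⊤ : Submodule A BB).FG)
  obtain ⟨⟨c, hcr⟩, hc⟩ := IsLocalization.exist_integer_multiples (nonZeroDivisors A) s
    (fun b : BB => (b : KK))
  refine ⟨c, fun b hb => ?_, hcr⟩
  have : (⟨b, hb⟩ : BB) ∈ Submodule.span A (s : Set BB) := hs ▸ Submodule.mem_top
  have key : ∀ x ∈ Submodule.span A (s : Set BB), ∃ e : A,
      algebraMap A KK e = algebraMap A KK c * (x : KK) := by
    intro x hx
    induction hx using Submodule.span_induction with
    | mem x hx =>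
      obtain ⟨e, he⟩ := hc x hx
      exact ⟨e, by rw [he]; simp [Algebra.smul_def]⟩
    | zero => exact ⟨0, by simp⟩
    | add x y _ _ hx hy =>
      obtain ⟨e, he⟩ := hx
      obtain ⟨f, hf⟩ := hy
      exact ⟨e + f, by simp [he, hf, mul_add]⟩
    | smul a x _ hx =>
      obtain ⟨e, he⟩ := hx
      exact ⟨a * e, by simp [he, Algebra.smul_def]; ring⟩
  exact key _ this

lemma cond_integral [IsNoetherianRing A] [Module.Finite A BB] (q : KK)
    (h : ∀ d : KK, (∀ x ∈ CC, d * algebraMap A KK x ∈ BB) →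
      ∀ x ∈ CC, (q * d) * algebraMap A KK x ∈ BB) : q ∈ BB := by
  obtain ⟨c, hc, hcr⟩ := cond_exists_regular (A := A)
  let N : Set KK := {d | ∀ x ∈ CC, d * algebraMap A KK x ∈ BB}
  let A' : Subalgebra A KK :=
    { carrier := {x | ∀ d ∈ N, x * d ∈ N}
      mul_mem' := fun {a b} ha hb d hd => by
        rw [mul_assoc]; exact ha _ (hb _ hd)
      add_mem' := fun {a b} ha hb d hd x hx => by
        rw [add_mul, add_mul]; exact add_mem (ha d hd x hx) (hb d hd x hx)
      algebraMap_mem' := fun r d hd x hx => by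
        rw [mul_assoc]; exact mul_mem (Subalgebra.algebraMap_mem _ r) (hd x hx) }
  have h1 : (1 : KK) ∈ N := fun x _ => by
    rw [one_mul]; exact Subalgebra.algebraMap_mem _ x
  have hA' : ∀ x ∈ A', algebraMap A KK c * x ∈ BB := fun x hx => by
    have := hx 1 h1 c hc
    rwa [mul_one, mul_comm] at this
  let f : A' →ₗ[A] BB :=
    { toFun := fun x => ⟨algebraMap A KK c * x, hA' x x.2⟩
      map_add' := fun x y => Subtype.ext (by simp [mul_add])
      map_smul' := fun a x => Subtype.ext (by simp [Algebra.smul_def]; ring) }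
  have hf : Function.Injective f := by
    intro x y hxy
    have hu : IsUnit (algebraMap A KK c) := IsLocalization.map_units KK ⟨c, hcr⟩
    exact Subtype.ext (hu.mul_left_cancel (congrArg Subtype.val hxy))
  have hn : IsNoetherian A A' := isNoetherian_of_injective f hf
  exact isIntegral_of_submodule_noetherian A' hn q (fun d hd => h d hd)

lemma cond_span_eq_top [IsNoetherianRing A] (hdim : ringKrullDim A = 1) [Module.Finite A BB] :
    Ideal.span {β : BB | ∃ c ∈ CC, ∃ d : KK, (∀ x ∈ CC, d * algebraMap A KK x ∈ BB) ∧
      (β : KK) = algebraMap A KK c * d} = ⊤ := by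
  by_contra hne
  obtain ⟨m, hm, hle⟩ := Ideal.exists_le_maximal _ hne
  obtain ⟨c, hc, hcr⟩ := cond_exists_regular (A := A)
  have hu : IsUnit (algebraMap A KK c) := IsLocalization.map_units KK ⟨c, hcr⟩
  have hNB : IsNoetherianRing BB := isNoetherian_of_tower A (inferInstance : IsNoetherian A BB)
  set a : BB := algebraMap A BB c with ha
  have hareg : a ∈ nonZeroDivisors BB := by
    rw [mem_nonZeroDivisors_iff_right]
    intro x hx
    apply Subtype.ext
    have := congrArg Subtype.val hx
    exact hu.mul_left_cancel (by simpa [mul_comm, ha] using this)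
  have ham : a ∈ m := hle (Ideal.subset_span ⟨c, hc, 1, fun x _ => by
    rw [one_mul]; exact Subalgebra.algebraMap_mem _ x, by rw [mul_one]; rfl⟩)
  have hmin : m ∈ (Ideal.span {a}).minimalPrimes := by
    refine ⟨⟨hm.isPrime, by simpa using ham⟩, ?_⟩
    rintro q ⟨hq, haq⟩ hqm
    by_contra hmq
    obtain ⟨p, hp, hpq⟩ := Ideal.exists_minimalPrimes_le (I := ⊥) (J := q) bot_le
    have hpp : p.IsPrime := hp.1.1
    have hlt1 : p < q := by
      refine lt_of_le_of_ne hpq ?_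
      rintro rfl
      exact notMem_nonZeroDivisors_of_mem_mem_minimalPrimes (haq (Ideal.mem_span_singleton_self a))
        hp hareg
    have hlt2 : q < m := lt_of_le_not_ge hqm hmq
    have l1 := Ideal.IsIntegral.comap_lt_comap (R := A) hlt1
    have l2 := Ideal.IsIntegral.comap_lt_comap (R := A) hlt2
    have : Ring.KrullDimLE 1 A := Ring.krullDimLE_iff.mpr hdim.le
    have := Ring.krullDimLE_one_iff.mp this (q.comap (algebraMap A BB)) inferInstance
    rcases this with h | h
    · exact absurd (h.2 ⟨inferInstance, bot_le⟩ l1.le) l1.not_ge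
    · have := h.eq_of_le (Ideal.IsPrime.ne_top inferInstance) l2.le
      exact l2.ne this
  have hass : m ∈ associatedPrimes BB (BB ⧸ Ideal.span {a}) := by
    apply Module.associatedPrimes.minimalPrimes_annihilator_subset_associatedPrimes
    rwa [Ideal.annihilator_quotient]
  obtain ⟨-, y', hy'⟩ := isAssociatedPrime_iff.mp hass
  obtain ⟨y, rfl⟩ := Ideal.Quotient.mk_surjective y'
  have hmem : ∀ z : BB, z ∈ m ↔ ∃ w : BB, z * y = a * w := by
    intro z
    rw [hy', Submodule.mem_colon_singleton, Submodule.mem_bot, ← Ideal.Quotient.mk_eq_mk,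
      ← Submodule.Quotient.mk_smul, Submodule.Quotient.mk_eq_zero, Ideal.mem_span_singleton]
    rfl
  obtain ⟨v, hv⟩ := hu.exists_left_inv
  have haK : (a : KK) = algebraMap A KK c := rfl
  have hq : v * (y : KK) ∈ BB := by
    apply cond_integral
    intro d hd x hx
    have hT : (⟨d * algebraMap A KK x, hd x hx⟩ : BB) ∈ m :=
      hle (Ideal.subset_span ⟨x, hx, d, hd, mul_comm _ _⟩)
    obtain ⟨w, hw⟩ := (hmem _).mp hT
    have hw' := congrArg Subtype.val hw
    have : v * (y : KK) * d * algebraMap A KK x = w := by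
      have e : d * algebraMap A KK x * (y : KK) = algebraMap A KK c * w := hw'
      linear_combination v * e + (w : KK) * hv
    rw [this]
    exact w.2
  apply hm.ne_top
  rw [Ideal.eq_top_iff_one, hmem]
  refine ⟨⟨_, hq⟩, Subtype.ext ?_⟩
  change (1 : KK) * y = algebraMap A KK c * (v * y)
  linear_combination -(y : KK) * hv

end Part1

section Part2
open HomogeneousLocalization

variable {A K S : Type u} [CommRing A] [CommRing K] [CommRing S] [Algebra A K] [Algebra A S]
  (𝒜 : ℕ → Submodule A S) [GradedAlgebra 𝒜] (ρ : S →ₐ[A] A)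

/-- Evaluation of degree-zero fractions, through `ρ`, in a `K`-algebra. -/
noncomputable def evAway (f : S) {T : Type u} [CommRing T] (θ : K →+* T)
    (h : IsUnit (θ (algebraMap A K (ρ f)))) : Away 𝒜 f →+* T :=
  (IsLocalization.Away.lift (S := Localization.Away f) f
    (g := (θ.comp (algebraMap A K)).comp (ρ : S →+* A)) h).comp
    (algebraMap (Away 𝒜 f) (Localization.Away f))

lemma evAway_mk (f : S) {T : Type u} [CommRing T] (θ : K →+* T)
    (h : IsUnit (θ (algebraMap A K (ρ f)))) {d : ℕ} (hf : f ∈ 𝒜 d) (n : ℕ) (x : S)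
    (hx : x ∈ 𝒜 (n • d)) :
    evAway 𝒜 ρ f θ h (Away.mk 𝒜 hf n x hx) * θ (algebraMap A K (ρ f)) ^ n =
      θ (algebraMap A K (ρ x)) := by
  have e : ∀ s : S, θ (algebraMap A K (ρ s)) = IsLocalization.Away.lift (S := Localization.Away f) f
    (g := (θ.comp (algebraMap A K)).comp (ρ : S →+* A)) h (algebraMap S _ s) := by
    intro s
    exact (IsLocalization.Away.lift_eq (S := Localization.Away f) f
      (g := (θ.comp (algebraMap A K)).comp (ρ : S →+* A)) h s).symm
  rw [e f, e x, evAway, RingHom.comp_apply, ← map_pow, ← map_mul, HomogeneousLocalization.algebraMap_apply, Away.val_mk, ← map_pow,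
    Localization.mk_eq_mk', IsLocalization.mk'_spec' _ x ⟨f ^ n, _⟩ |> (mul_comm _ _).trans]

lemma evAway_awayMap (f g x : S) {T : Type u} [CommRing T] (θ : K →+* T)
    (h : IsUnit (θ (algebraMap A K (ρ f)))) (h' : IsUnit (θ (algebraMap A K (ρ x))))
    {d e : ℕ} (hf : f ∈ 𝒜 d) (hg : g ∈ 𝒜 e) (hx : x = f * g) (z : Away 𝒜 f) :
    evAway 𝒜 ρ x θ h' (awayMap 𝒜 hg hx z) = evAway 𝒜 ρ f θ h z := by
  obtain ⟨n, a, ha, rfl⟩ := Away.mk_surjective 𝒜 hf z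
  rw [awayMap_mk]
  apply (h.pow n).mul_right_cancel
  rw [evAway_mk]
  have hgu : IsUnit (θ (algebraMap A K (ρ g))) := by
    subst hx
    rw [map_mul, map_mul, map_mul] at h'
    exact isUnit_of_mul_isUnit_right h'
  apply (hgu.pow n).mul_right_cancel
  have hfg : θ (algebraMap A K (ρ f)) * θ (algebraMap A K (ρ g)) = θ (algebraMap A K (ρ x)) := by
    rw [hx, map_mul, map_mul, map_mul]
  rw [mul_assoc, ← mul_pow, hfg, evAway_mk]
  simp

/-- The universal target of `evAway`. -/
noncomputable abbrev evT (f : S) : Away 𝒜 f →+* Localization.Away (algebraMap A K (ρ f)) :=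
  evAway 𝒜 ρ f (algebraMap K _) (IsLocalization.Away.algebraMap_isUnit _)

lemma evT_injective (hAK : Function.Injective (algebraMap A K))
    (hinj : ∀ n, ∀ x ∈ 𝒜 n, ρ x = 0 → x = 0) (f : S) {d : ℕ} (hf : f ∈ 𝒜 d) :
    Function.Injective (evT (K := K) 𝒜 ρ f) := by
  rw [injective_iff_map_eq_zero]
  intro z hz
  obtain ⟨n, x, hx, rfl⟩ := Away.mk_surjective 𝒜 hf z
  have h := evAway_mk 𝒜 ρ f (algebraMap K (Localization.Away (algebraMap A K (ρ f))))
    (IsLocalization.Away.algebraMap_isUnit _) hf n x hx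
  rw [hz, zero_mul] at h
  obtain ⟨⟨_, m, rfl⟩, hm⟩ := (IsLocalization.map_eq_zero_iff
    (Submonoid.powers (algebraMap A K (ρ f))) _ _).mp h.symm
  have h0 : f ^ m * x = 0 := by
    apply hinj _ _ (SetLike.mul_mem_graded (SetLike.pow_mem_graded m hf) hx)
    apply hAK
    simpa using hm
  apply HomogeneousLocalization.val_injective
  rw [Away.val_mk, val_zero, Localization.mk_eq_mk', IsLocalization.mk'_eq_zero_iff]
  exact ⟨⟨f ^ m, m, rfl⟩, h0⟩

variable (B : Subalgebra A K) (C : Ideal A)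

lemma exists_phi (hAK : Function.Injective (algebraMap A K))
    (hinj : ∀ n, ∀ x ∈ 𝒜 n, ρ x = 0 → x = 0)
    (hmem : ∀ n, ∀ x ∈ 𝒜 n, ρ x ∈ C ^ n)
    (hsurj : ∀ n, ∀ c ∈ C ^ n, ∃ x ∈ 𝒜 n, ρ x = c)
    (hC : ∀ c ∈ C, ∀ b ∈ B, ∃ c' ∈ C, algebraMap A K c' = algebraMap A K c * b)
    (f : S) (hf : f ∈ 𝒜 1) :
    ∃ φ : B →+* Away 𝒜 f, ∀ b : B, evT (K := K) 𝒜 ρ f (φ b) = algebraMap K _ (b : K) := by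
  have hi := evT_injective (K := K) 𝒜 ρ hAK hinj f hf
  have hr : ∀ b : B, algebraMap K (Localization.Away (algebraMap A K (ρ f))) (b : K) ∈
      (evT (K := K) 𝒜 ρ f).range := by
    intro b
    obtain ⟨c', hc', e⟩ := hC (ρ f) (by simpa using hmem 1 f hf) b b.2
    obtain ⟨x, hx, rfl⟩ := hsurj 1 c' (by simpa using hc')
    refine ⟨Away.mk 𝒜 hf 1 x (by simpa using hx), ?_⟩
    have hu : IsUnit (algebraMap K (Localization.Away (algebraMap A K (ρ f)))
      (algebraMap A K (ρ f))) := IsLocalization.Away.algebraMap_isUnit _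
    apply (hu.pow 1).mul_right_cancel
    rw [evAway_mk, e, map_mul, pow_one, mul_comm]
  let E := RingEquiv.ofBijective (evT (K := K) 𝒜 ρ f).rangeRestrict
    ⟨fun x y h => hi (congrArg Subtype.val h), (evT (K := K) 𝒜 ρ f).rangeRestrict_surjective⟩
  refine ⟨(E.symm : _ →+* Away 𝒜 f).comp
    (((algebraMap K _).comp B.val.toRingHom).codRestrict _ hr), fun b => ?_⟩
  exact congrArg Subtype.val (E.apply_symm_apply _)

lemma isLocalization_phi (hAK : Function.Injective (algebraMap A K))
    (hinj : ∀ n, ∀ x ∈ 𝒜 n, ρ x = 0 → x = 0)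
    (hmem : ∀ n, ∀ x ∈ 𝒜 n, ρ x ∈ C ^ n)
    (hsurj : ∀ n, ∀ c ∈ C ^ n, ∃ x ∈ 𝒜 n, ρ x = c)
    (f : S) (hf : f ∈ 𝒜 1) (φ : B →+* Away 𝒜 f)
    (hφ : ∀ b : B, evT (K := K) 𝒜 ρ f (φ b) = algebraMap K _ (b : K))
    (β : B) (c : A) (hc : c ∈ C) (d : K) (hd : ∀ x ∈ C, d * algebraMap A K x ∈ B)
    (hβ : (β : K) = algebraMap A K c * d)
    (hfβ : algebraMap A K (ρ f) = β * algebraMap A K c) :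
    @IsLocalization.Away B _ β (Away 𝒜 f) _ φ.toAlgebra := by
  let _ := φ.toAlgebra
  have hi := evT_injective (K := K) 𝒜 ρ hAK hinj f hf
  have hu : IsUnit (algebraMap K (Localization.Away (algebraMap A K (ρ f)))
      (algebraMap A K (ρ f))) := IsLocalization.Away.algebraMap_isUnit _
  have hdf : d * algebraMap A K (ρ f) = β ^ 2 := by rw [hfβ, hβ]; ring
  have hdn : ∀ n, ∀ x ∈ C ^ n, d ^ n * algebraMap A K x ∈ B := by
    intro n
    induction n with
    | zero => intro x _; simp
    | succ n ih =>
      intro x hx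
      rw [pow_succ] at hx
      refine Submodule.mul_induction_on hx ?_ ?_
      · intro y hy z hz
        have := mul_mem (ih y hy) (hd z hz)
        rw [map_mul]
        convert! this using 1
        ring
      · intro y z hy hz
        rw [map_add, mul_add]
        exact add_mem hy hz
  have halg : ∀ b : B, algebraMap B (Away 𝒜 f) b = φ b := fun _ => rfl
  refine IsLocalization.Away.mk (S := Away 𝒜 f) β ?_ ?_ ?_
  · obtain ⟨x, hx, hxc⟩ := hsurj 1 c (by simpa using hc)
    refine IsUnit.of_mul_eq_one (Away.mk 𝒜 hf 1 x (by simpa using hx)) (hi ?_)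
    rw [map_mul, map_one, halg, hφ]
    apply (hu.pow 1).mul_right_cancel
    rw [mul_assoc, evAway_mk, hxc, ← map_mul, ← hfβ, one_mul, pow_one]
  · intro z
    obtain ⟨n, x, hx, rfl⟩ := Away.mk_surjective 𝒜 hf z
    have hx' : x ∈ 𝒜 n := by simpa using hx
    refine ⟨2 * n, ⟨d ^ n * algebraMap A K (ρ x), hdn n _ (hmem n x hx')⟩, hi ?_⟩
    rw [map_mul, map_pow, halg, halg, hφ, hφ]
    apply (hu.pow n).mul_right_cancel
    rw [mul_right_comm, evAway_mk]
    simp only [← map_pow, ← map_mul]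
    congr 1
    rw [pow_mul, ← hdf]
    simp only [map_pow]
    ring
  · intro a b hab
    have h := congrArg (evT (K := K) 𝒜 ρ f) hab
    rw [halg, halg, hφ, hφ] at h
    obtain ⟨⟨_, m, rfl⟩, hm⟩ := (IsLocalization.eq_iff_exists
      (Submonoid.powers (algebraMap A K (ρ f))) _).mp h
    refine ⟨2 * m, Subtype.ext ?_⟩
    have hm' : algebraMap A K (ρ f) ^ m * (a : K) = algebraMap A K (ρ f) ^ m * (b : K) := hm
    have e : (β : K) ^ (2 * m) = d ^ m * algebraMap A K (ρ f) ^ m := by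
      rw [pow_mul, ← hdf, mul_pow]
    push_cast
    rw [e, mul_assoc, mul_assoc, hm']

/-- Comparison of the two basic opens in a chart. -/
lemma chart_rel (hAK : Function.Injective (algebraMap A K))
    (hinj : ∀ n, ∀ x ∈ 𝒜 n, ρ x = 0 → x = 0)
    (hmem : ∀ n, ∀ x ∈ 𝒜 n, ρ x ∈ C ^ n)
    (hsurj : ∀ n, ∀ c ∈ C ^ n, ∃ x ∈ 𝒜 n, ρ x = c)
    (f : S) (hf : f ∈ 𝒜 1) (φ : B →+* Away 𝒜 f)
    (hφ : ∀ b : B, evT (K := K) 𝒜 ρ f (φ b) = algebraMap K _ (b : K))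
    (β : B) (c : A) (hc : c ∈ C) (d : K) (hd : ∀ x ∈ C, d * algebraMap A K x ∈ B)
    (hβ : (β : K) = algebraMap A K c * d)
    (g : S) (hg : g ∈ 𝒜 1)
    (hgβ : algebraMap A K (ρ g) = β * algebraMap A K c) :
    PrimeSpectrum.basicOpen (φ β) = PrimeSpectrum.basicOpen (Away.isLocalizationElem hf hg) := by
  have hi := evT_injective (K := K) 𝒜 ρ hAK hinj f hf
  have hu : IsUnit (algebraMap K (Localization.Away (algebraMap A K (ρ f)))
      (algebraMap A K (ρ f))) := IsLocalization.Away.algebraMap_isUnit _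
  obtain ⟨x, hx, hxc⟩ := hsurj 1 c (by simpa using hc)
  have e1 : Away.isLocalizationElem hf hg =
      φ β * (Away.mk 𝒜 hf 1 x (by simpa using hx)) := by
    apply hi
    apply (hu.pow 1).mul_right_cancel
    rw [map_mul, mul_assoc, evAway_mk, evAway_mk, hφ, pow_one, hxc, hgβ, map_mul]
  have e2 : φ β ^ 2 = φ ⟨d * algebraMap A K (ρ f), hd _ (by simpa using hmem 1 f hf)⟩ *
      Away.isLocalizationElem hf hg := by
    apply hi
    apply (hu.pow 1).mul_right_cancel
    rw [map_mul, mul_assoc, evAway_mk, map_pow, hφ, hφ]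
    simp only [pow_one, hgβ]
    simp only [← map_pow, ← map_mul]
    congr 1
    rw [hβ]
    ring
  apply le_antisymm
  · rw [← PrimeSpectrum.basicOpen_pow (φ β) 2 two_pos, e2]
    exact PrimeSpectrum.basicOpen_mul_le_right _ _
  · rw [e1]
    exact PrimeSpectrum.basicOpen_mul_le_left _ _

lemma phi_compat (hAK : Function.Injective (algebraMap A K))
    (hinj : ∀ n, ∀ x ∈ 𝒜 n, ρ x = 0 → x = 0)
    (f : S) (hf : f ∈ 𝒜 1) (φ : B →+* Away 𝒜 f)
    (hφ : ∀ b : B, evT (K := K) 𝒜 ρ f (φ b) = algebraMap K _ (b : K))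
    (g : S) (hg : g ∈ 𝒜 1) (φ' : B →+* Away 𝒜 g)
    (hφ' : ∀ b : B, evT (K := K) 𝒜 ρ g (φ' b) = algebraMap K _ (b : K)) :
    (awayMap 𝒜 hg (rfl : f * g = f * g)).comp φ =
      (awayMap 𝒜 hf (mul_comm f g)).comp φ' := by
  have key : ∀ (f : S) (hf : f ∈ 𝒜 1) (φ : B →+* Away 𝒜 f)
    (hφ : ∀ b : B, evT (K := K) 𝒜 ρ f (φ b) = algebraMap K _ (b : K))
    (g : S) (hg : g ∈ 𝒜 1) (x : S) (hx : x = f * g) (b : B),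
    evT (K := K) 𝒜 ρ x (awayMap 𝒜 hg hx (φ b)) = algebraMap K _ (b : K) := by
    intro f hf φ hφ g hg x hx b
    have hu : IsUnit (algebraMap K (Localization.Away (algebraMap A K (ρ x)))
      (algebraMap A K (ρ x))) := IsLocalization.Away.algebraMap_isUnit _
    have hu' : IsUnit (algebraMap K (Localization.Away (algebraMap A K (ρ x)))
      (algebraMap A K (ρ f))) :=
      isUnit_of_dvd_unit (map_dvd _ (map_dvd _ (map_dvd ρ ⟨g, hx⟩))) hu
    rw [evT, evAway_awayMap (h := hu') (hf := hf)]
    obtain ⟨n, a, ha, hz⟩ := Away.mk_surjective 𝒜 hf (φ b)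
    have h3 := hφ b
    rw [← hz] at h3 ⊢
    have h4 := evAway_mk 𝒜 ρ f (algebraMap K (Localization.Away (algebraMap A K (ρ f))))
      (IsLocalization.Away.algebraMap_isUnit _) hf n a ha
    rw [h3, ← map_pow, ← map_mul] at h4
    obtain ⟨⟨_, m, rfl⟩, hm⟩ := (IsLocalization.eq_iff_exists
      (Submonoid.powers (algebraMap A K (ρ f))) _).mp h4
    apply (hu'.pow n).mul_right_cancel
    rw [evAway_mk]
    apply (hu'.pow m).mul_left_cancel
    simp only [← map_pow, ← map_mul]
    congr 1
    simpa using hm.symm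
  ext1 b
  apply evT_injective (K := K) 𝒜 ρ hAK hinj (f * g) (SetLike.mul_mem_graded hf hg)
  exact (key f hf φ hφ g hg _ rfl b).trans (key g hg φ' hφ' f hf _ (mul_comm f g) b).symm

lemma phi_algebraMap (hAK : Function.Injective (algebraMap A K))
    (hinj : ∀ n, ∀ x ∈ 𝒜 n, ρ x = 0 → x = 0)
    (f : S) (hf : f ∈ 𝒜 1) (φ : B →+* Away 𝒜 f)
    (hφ : ∀ b : B, evT (K := K) 𝒜 ρ f (φ b) = algebraMap K _ (b : K)) :
    φ.comp (algebraMap A B) = (fromZeroRingHom 𝒜 _).comp (algebraMap A (𝒜 0)) := by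
  ext1 a
  apply evT_injective (K := K) 𝒜 ρ hAK hinj f hf
  rw [RingHom.comp_apply, hφ]
  have e : ((fromZeroRingHom 𝒜 (Submonoid.powers f)).comp (algebraMap A (𝒜 0))) a =
      Away.mk 𝒜 hf 0 (algebraMap A S a) (by
        rw [zero_smul]; exact SetLike.algebraMap_mem_graded 𝒜 a) := by
    apply HomogeneousLocalization.val_injective
    rw [Away.val_mk]
    simp [fromZeroRingHom]
    rfl
  have := evAway_mk 𝒜 ρ f (algebraMap K (Localization.Away (algebraMap A K (ρ f))))
      (IsLocalization.Away.algebraMap_isUnit _) hf 0 (algebraMap A S a) (by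
        rw [zero_smul]; exact SetLike.algebraMap_mem_graded 𝒜 a)
  rw [e, evT]
  rw [pow_zero, mul_one] at this
  rw [this]
  simp

lemma irrelevant_le (hinj : ∀ n, ∀ x ∈ 𝒜 n, ρ x = 0 → x = 0)
    (hmem : ∀ n, ∀ x ∈ 𝒜 n, ρ x ∈ C ^ n)
    (hsurj : ∀ n, ∀ c ∈ C ^ n, ∃ x ∈ 𝒜 n, ρ x = c) :
    (HomogeneousIdeal.irrelevant 𝒜).toIdeal ≤
      Ideal.span (Set.range (fun f : 𝒜 1 => (f : S))) := by
  classical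
  have key : ∀ n, ∀ c ∈ C ^ (n + 1), ∃ x ∈ 𝒜 (n + 1), ρ x = c ∧
      x ∈ Ideal.span (Set.range (fun f : 𝒜 1 => (f : S))) := by
    intro n c hc
    rw [pow_succ] at hc
    refine Submodule.mul_induction_on hc ?_ ?_
    · intro y hy z hz
      obtain ⟨y', hy', rfl⟩ := hsurj n y hy
      obtain ⟨z', hz', rfl⟩ := hsurj 1 z (by simpa using hz)
      exact ⟨y' * z', SetLike.mul_mem_graded hy' hz', map_mul _ _ _,
        Ideal.mul_mem_left _ _ (Ideal.subset_span ⟨⟨z', hz'⟩, rfl⟩)⟩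
    · rintro y z ⟨y', hy', rfl, hy⟩ ⟨z', hz', rfl, hz⟩
      exact ⟨y' + z', add_mem hy' hz', map_add _ _ _, add_mem hy hz⟩
  intro x hx
  rw [← DirectSum.sum_support_decompose 𝒜 x]
  refine Ideal.sum_mem _ fun n _ => ?_
  rcases n with _ | n
  · have : (DirectSum.decompose 𝒜 x 0 : S) = 0 := hx
    rw [this]
    exact zero_mem _
  · obtain ⟨y, hy, hyx, hys⟩ := key n _ (hmem _ _ (DirectSum.decompose 𝒜 x (n + 1)).2)
    have : (DirectSum.decompose 𝒜 x (n + 1) : S) = y := by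
      rw [← sub_eq_zero]
      exact hinj _ _ (sub_mem (DirectSum.decompose 𝒜 x (n + 1)).2 hy) (by rw [map_sub, hyx, sub_self])
    rw [this]
    exact hys
end Part2

section Part3
open HomogeneousLocalization

lemma isIso_of_charts {X Y : Scheme.{u}} (F : X ⟶ Y) {ι : Type u} (U : ι → Y.Opens)
    (hU : iSup U = ⊤)
    (h : ∀ i, ∃ (Z : Scheme.{u}) (j : Z ⟶ X) (_ : IsOpenImmersion j)
      (_ : IsOpenImmersion (j ≫ F)), j.opensRange = F ⁻¹ᵁ U i ∧ U i ≤ (j ≫ F).opensRange) :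
    IsIso F := by
  change MorphismProperty.isomorphisms Scheme F
  refine IsZariskiLocalAtTarget.of_iSup_eq_top (P := MorphismProperty.isomorphisms Scheme) U hU ?_
  intro i
  obtain ⟨Z, j, hj, hjF, hr, hle⟩ := h i
  change IsIso (F ∣_ U i)
  let e := IsOpenImmersion.isoOfRangeEq j (F ⁻¹ᵁ U i).ι (by
    rw [Scheme.Opens.range_ι, ← hr]; rfl)
  have he : e.hom ≫ (F ⁻¹ᵁ U i).ι = j := IsOpenImmersion.isoOfRangeEq_hom_fac _ _ _
  have h1 : (e.hom ≫ F ∣_ U i) ≫ (U i).ι = j ≫ F := by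
    rw [Category.assoc, morphismRestrict_ι, ← Category.assoc, he]
  have h2 : IsOpenImmersion ((e.hom ≫ F ∣_ U i) ≫ (U i).ι) := by rw [h1]; exact hjF
  have h3 : IsOpenImmersion (e.hom ≫ F ∣_ U i) := IsOpenImmersion.of_comp _ (U i).ι
  have h4 : IsIso (e.hom ≫ F ∣_ U i) := by
    rw [isIso_iff_isOpenImmersion_and_surjective]
    refine ⟨h3, ⟨fun y => ?_⟩⟩
    obtain ⟨z, hz⟩ := hle y.2
    refine ⟨z, ?_⟩
    apply (U i).ι.injective
    rw [← Scheme.Hom.comp_apply, h1]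
    exact hz
  exact IsIso.of_isIso_comp_left e.hom _

variable {A K S : Type u} [CommRing A] [CommRing K] [CommRing S] [Algebra A K] [Algebra A S]
  (𝒜 : ℕ → Submodule A S) [GradedAlgebra 𝒜] (ρ : S →ₐ[A] A)
  (B : Subalgebra A K) (C : Ideal A)

theorem main_abstract (hAK : Function.Injective (algebraMap A K))
    (hinj : ∀ n, ∀ x ∈ 𝒜 n, ρ x = 0 → x = 0)
    (hmem : ∀ n, ∀ x ∈ 𝒜 n, ρ x ∈ C ^ n)
    (hsurj : ∀ n, ∀ c ∈ C ^ n, ∃ x ∈ 𝒜 n, ρ x = c)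
    (hC : ∀ c ∈ C, ∀ b ∈ B, ∃ c' ∈ C, algebraMap A K c' = algebraMap A K c * b)
    (hT : Ideal.span {β : B | ∃ c ∈ C, ∃ d : K, (∀ x ∈ C, d * algebraMap A K x ∈ B) ∧
      (β : K) = algebraMap A K c * d} = ⊤) :
    ∃ e : Proj 𝒜 ≅ Spec (CommRingCat.of B),
      e.hom ≫ Spec.map (CommRingCat.ofHom (algebraMap A B))
        = Proj.toSpecZero 𝒜 ≫ Spec.map (CommRingCat.ofHom (algebraMap A (𝒜 0))) := by
  have hex : ∀ f : 𝒜 1, ∃ φ : B →+* Away 𝒜 (f : S), ∀ b,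
      evT (K := K) 𝒜 ρ f (φ b) = algebraMap K _ (b : K) :=
    fun f => exists_phi 𝒜 ρ B C hAK hinj hmem hsurj hC f f.2
  choose φ hφ using hex
  let 𝒰 := (Proj.affineOpenCoverOfIrrelevantLESpan 𝒜 (fun f : 𝒜 1 => (f : S)) (m := fun _ => 1)
    (fun f => f.2) (fun _ => one_pos) (irrelevant_le 𝒜 ρ C hinj hmem hsurj)).openCover
  let F : Proj 𝒜 ⟶ Spec (CommRingCat.of B) :=
    Scheme.Cover.glueMorphisms 𝒰 (fun f : 𝒜 1 => Spec.map (CommRingCat.ofHom (φ f))) (by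
      intro f' g'
      obtain ⟨f, hfe⟩ : ∃ f : 𝒜 1, f = f' := ⟨f', rfl⟩
      obtain ⟨g, hge⟩ : ∃ g : 𝒜 1, g = g' := ⟨g', rfl⟩
      subst hfe hge
      change Limits.pullback.fst (Proj.awayι 𝒜 (f : S) f.2 one_pos)
          (Proj.awayι 𝒜 (g : S) g.2 one_pos) ≫ Spec.map (CommRingCat.ofHom (φ f)) =
        Limits.pullback.snd (Proj.awayι 𝒜 (f : S) f.2 one_pos)
          (Proj.awayι 𝒜 (g : S) g.2 one_pos) ≫ Spec.map (CommRingCat.ofHom (φ g))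
      rw [← Proj.pullbackAwayιIso_hom_SpecMap_awayMap_left 𝒜 f.2 one_pos g.2 one_pos rfl,
        ← Proj.pullbackAwayιIso_hom_SpecMap_awayMap_right 𝒜 f.2 one_pos g.2 one_pos rfl,
        Category.assoc, Category.assoc, ← Spec.map_comp, ← Spec.map_comp,
        ← CommRingCat.ofHom_comp, ← CommRingCat.ofHom_comp,
        phi_compat 𝒜 ρ B hAK hinj f f.2 (φ f) (hφ f) g g.2 (φ g) (hφ g)])
  have hF : ∀ f : 𝒜 1, Proj.awayι 𝒜 (f : S) f.2 one_pos ≫ F =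
      Spec.map (CommRingCat.ofHom (φ f)) := fun f =>
    Scheme.Cover.ι_glueMorphisms 𝒰 _ _ f
  have hcov : ∀ x : Proj 𝒜, ∃ (f : 𝒜 1) (y : Spec (CommRingCat.of (Away 𝒜 (f : S)))),
      Proj.awayι 𝒜 (f : S) f.2 one_pos y = x := by
    intro x
    obtain ⟨y, hy⟩ := 𝒰.covers x
    exact ⟨𝒰.idx x, y, hy⟩
  have hiso : IsIso F := by
    refine isIso_of_charts F (ι := {β : B | ∃ c ∈ C, ∃ d : K,
      (∀ x ∈ C, d * algebraMap A K x ∈ B) ∧ (β : K) = algebraMap A K c * d})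
      (fun β => PrimeSpectrum.basicOpen (β : B)) ?_ ?_
    · refine (PrimeSpectrum.iSup_basicOpen_eq_top_iff (R := B)).mpr ?_
      rw [Subtype.range_coe]
      exact hT
    · rintro ⟨β, c, hc, d, hd, hβ⟩
      obtain ⟨c', hc', hcc⟩ := hC c hc β β.2
      obtain ⟨g, hg, hgc⟩ := hsurj 1 c' (by rwa [pow_one])
      have hgβ : algebraMap A K (ρ g) = β * algebraMap A K c := by rw [hgc, hcc, mul_comm]
      have hloc := isLocalization_phi 𝒜 ρ B C hAK hinj hmem hsurj g hg (φ ⟨g, hg⟩) (hφ ⟨g, hg⟩)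
        β c hc d hd hβ hgβ
      let _ := (φ ⟨g, hg⟩).toAlgebra
      have hoi : IsOpenImmersion (Spec.map (CommRingCat.ofHom (φ ⟨g, hg⟩))) :=
        IsOpenImmersion.of_isLocalization (S := Away 𝒜 g) β
      have hFg := hF ⟨g, hg⟩
      refine ⟨_, Proj.awayι 𝒜 g hg one_pos, inferInstance, ?_, ?_, ?_⟩
      · rw [hFg]; exact hoi
      · rw [Proj.opensRange_awayι]
        ext x
        obtain ⟨f, y, rfl⟩ := hcov x
        have h1 : y ∈ Proj.awayι 𝒜 (f : S) f.2 one_pos ⁻¹ᵁ Proj.basicOpen 𝒜 g ↔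
            y ∈ Proj.awayι 𝒜 (f : S) f.2 one_pos ⁻¹ᵁ (F ⁻¹ᵁ PrimeSpectrum.basicOpen β) := by
          rw [Proj.awayι_preimage_basicOpen 𝒜 f.2 one_pos hg one_pos,
            ← chart_rel 𝒜 ρ B C hAK hinj hmem hsurj f f.2 (φ f) (hφ f) β c hc d hd hβ g hg hgβ]
          have h5 : ∀ V : (Spec (CommRingCat.of B)).Opens,
              Proj.awayι 𝒜 (f : S) f.2 one_pos ⁻¹ᵁ (F ⁻¹ᵁ V) =
              Spec.map (CommRingCat.ofHom (φ f)) ⁻¹ᵁ V := by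
            intro V
            rw [← hF f]
            rfl
          have h4 := h5 (PrimeSpectrum.basicOpen β)
          exact (Iff.of_eq (congrArg (fun V => y ∈ V) h4)).symm
        exact h1
      · intro y hy
        have h2 := PrimeSpectrum.localization_away_comap_range (Away 𝒜 g) β
        have h3 : y ∈ Set.range (PrimeSpectrum.comap (algebraMap B (Away 𝒜 g))) := by
          rw [h2]; exact hy
        obtain ⟨z, hz⟩ := h3
        refine ⟨z, ?_⟩
        rw [hFg]
        exact hz
  refine ⟨asIso F, ?_⟩
  refine Scheme.Cover.hom_ext 𝒰 _ _ fun f' => ?_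
  obtain ⟨f, hfe⟩ : ∃ f : 𝒜 1, f = f' := ⟨f', rfl⟩
  subst hfe
  change Proj.awayι 𝒜 (f : S) f.2 one_pos ≫ F ≫ _ =
    Proj.awayι 𝒜 (f : S) f.2 one_pos ≫ _
  rw [← Category.assoc, hF f, Proj.awayι_toSpecZero_assoc, ← Spec.map_comp, ← Spec.map_comp,
    ← CommRingCat.ofHom_comp, ← CommRingCat.ofHom_comp,
    phi_algebraMap 𝒜 ρ B hAK hinj f f.2 (φ f) (hφ f)]

end Part3

/-- Let `A` be a reduced Noetherian commutative ring of Krull dimension one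
whose integral closure `B` in `Q(A)` is a finite `A`-module.  Then the blow up of `Spec A`
in the conductor ideal `C = A :_{Q(A)} B` coincides with the normalization `Spec B`:
`Proj_A (⊕_{i≥0} C^i) ≅ Spec B` over `Spec A`.  The blow up is rendered as `Proj 𝒜` for any
realization `(S, 𝒜)` of the Rees algebra `⊕_{i≥0} C^i` as a graded `A`-algebra, and the
isomorphism is compatible with the structure morphisms to `Spec A`. -/
theorem stmt_14 (A : Type u) [CommRing A] [IsNoetherianRing A] [IsReduced A]
    (hdim : ringKrullDim A = 1)
    [Module.Finite A (integralClosure A (FractionRing A))] :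
    ∀ (S : Type u) [CommRing S] [Algebra A S]
      (𝒜 : ℕ → Submodule A S) [GradedAlgebra 𝒜]
      (ψ : S ≃ₐ[A] reesAlgebra (conductorIdeal A (FractionRing A)
        (integralClosure A (FractionRing A))))
      (_ : ∀ (n : ℕ) (x : S), x ∈ 𝒜 n ↔
        ∀ m, m ≠ n → ((ψ x : Polynomial A).coeff m = 0)),
      ∃ e : Proj 𝒜 ≅ Spec (CommRingCat.of (integralClosure A (FractionRing A))),
        e.hom ≫ Spec.map (CommRingCat.ofHom
            (algebraMap A (integralClosure A (FractionRing A))))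
          = Proj.toSpecZero 𝒜 ≫ Spec.map (CommRingCat.ofHom (algebraMap A (𝒜 0))) := by
  intro S _ _ 𝒜 _ ψ hψ
  have hsup : ∀ n, ∀ x ∈ 𝒜 n, (ψ x : Polynomial A) =
      Polynomial.monomial n ((ψ x : Polynomial A).coeff n) := by
    intro n x hx
    ext m
    rw [Polynomial.coeff_monomial]
    split_ifs with h
    · rw [h]
    · exact (hψ n x).mp hx m (Ne.symm h)
  let ρ : S →ₐ[A] A := ((Polynomial.aeval (1 : A)).comp (Subalgebra.val _)).comp
    ψ.toAlgHom
  have hρ : ∀ x, ρ x = Polynomial.aeval (1 : A) (ψ x : Polynomial A) := fun _ => rfl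
  have hρc : ∀ n, ∀ x ∈ 𝒜 n, ρ x = (ψ x : Polynomial A).coeff n := by
    intro n x hx
    rw [hρ, hsup n x hx]
    simp
  refine main_abstract 𝒜 ρ (integralClosure A (FractionRing A))
    (conductorIdeal A (FractionRing A) (integralClosure A (FractionRing A)))
    (IsFractionRing.injective A (FractionRing A)) ?_ ?_ ?_ ?_ (cond_span_eq_top hdim)
  · intro n x hx h0
    have h := hsup n x hx
    rw [← hρc n x hx, h0, map_zero] at h
    have h1 : ψ x = 0 := Subtype.ext h
    exact (map_eq_zero_iff ψ ψ.injective).mp h1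
  · intro n x hx
    rw [hρc n x hx]
    exact (ψ x).2 n
  · intro n c hc
    have hm : ψ.symm ⟨Polynomial.monomial n c, reesAlgebra.monomial_mem.mpr hc⟩ ∈ 𝒜 n := by
      rw [hψ]
      intro m hmn
      rw [AlgEquiv.apply_symm_apply]
      exact Polynomial.coeff_monomial_of_ne c hmn
    refine ⟨_, hm, ?_⟩
    rw [hρc n _ hm, AlgEquiv.apply_symm_apply]
    exact Polynomial.coeff_monomial_same n c
  · intro c hc b hb
    exact cond_exists_mul hc ⟨b, hb⟩
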